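/- Let G be a group, r a natural number, and let S, S' : Fin r → G be two tuples whose images each generate G. Let φ_S, φ_{S'} : FreeGroup (Fin r) → G denote the group homomorphisms determined by sending the i-th free generator to S i and to S' i respectively. Then S and S' are Nielsen equivalent if and only if there exists a group automorphism ψ of FreeGroup (Fin r) such that φ_S = φ_{S'} ∘ ψ. -/

import Mathlib

/-- An elementary Nielsen move on ordered `r`-tuples of elements of a group `G`:
inversion of one entry, permutation (swap) of two entries, or a twist replacing
`g_i` by `g_i * g_j` for some `j ≠ i`, all other entries being kept fixed. -/
def NielsenMove {G : Type*} [Group G] {r : ℕ} (S S' : Fin r → G) : Prop :=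
  (∃ i, S' i = (S i)⁻¹ ∧ ∀ k, k ≠ i → S' k = S k) ∨
  (∃ i j, i ≠ j ∧ S' i = S j ∧ S' j = S i ∧ ∀ k, k ≠ i → k ≠ j → S' k = S k) ∨
  (∃ i j, j ≠ i ∧ S' i = S i * S j ∧ ∀ k, k ≠ i → S' k = S k)

/-- Two tuples are Nielsen equivalent if they lie in the same class of the equivalence
relation generated by the elementary Nielsen moves. -/
def NielsenEquiv {G : Type*} [Group G] {r : ℕ} (S S' : Fin r → G) : Prop :=
  Relation.EqvGen NielsenMove S S'

namespace NielsenAux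

open FreeGroup

/-- Length of the longest common prefix. -/
def lcp {α : Type*} [DecidableEq α] : List α → List α → ℕ
  | a :: l, b :: m => if a = b then lcp l m + 1 else 0
  | _, _ => 0

theorem lcp_comm {α : Type*} [DecidableEq α] : ∀ l m : List α, lcp l m = lcp m l
  | [], [] => rfl
  | [], _ :: _ => rfl
  | _ :: _, [] => rfl
  | a :: l, b :: m => by
    by_cases h : a = b
    · subst h; simp [lcp, lcp_comm l m]
    · simp [lcp, h, Ne.symm h]

theorem lcp_spec {α : Type*} [DecidableEq α] : ∀ l m : List α,
    ∃ c a b, l = c ++ a ∧ m = c ++ b ∧ c.length = lcp l m ∧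
      ∀ x ∈ a.head?, ∀ y ∈ b.head?, x ≠ y
  | [], m => ⟨[], [], m, by simp [lcp]⟩
  | a :: l, [] => ⟨[], a :: l, [], by simp [lcp]⟩
  | a :: l, b :: m => by
    by_cases h : a = b
    · subst h
      obtain ⟨c, a', b', h1, h2, h3, h4⟩ := lcp_spec l m
      exact ⟨a :: c, a', b', by simp [← h1], by simp [← h2], by simp [lcp, h3], h4⟩
    · exact ⟨[], a :: l, b :: m, by simp [lcp, h]⟩

theorem le_lcp_of_prefix {α : Type*} [DecidableEq α] : ∀ p l m : List α,
    p <+: l → p <+: m → p.length ≤ lcp l m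
  | [], _, _, _, _ => by simp
  | x :: p, [], _, h, _ => by simp at h
  | x :: p, _ :: _, [], _, h => by simp at h
  | x :: p, a :: l, b :: m, h1, h2 => by
    rw [List.cons_prefix_cons] at h1 h2
    obtain ⟨rfl, h1⟩ := h1
    obtain ⟨rfl, h2⟩ := h2
    simpa [lcp] using le_lcp_of_prefix p l m h1 h2

theorem lcp_ultra {α : Type*} [DecidableEq α] (l m n : List α) :
    min (lcp l m) (lcp m n) ≤ lcp l n := by
  obtain ⟨c, a, b, h1, h2, h3, -⟩ := lcp_spec l m
  obtain ⟨d, e, f, k1, k2, k3, -⟩ := lcp_spec m n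
  have hc : c <+: m := ⟨b, h2.symm⟩
  have hd : d <+: m := ⟨e, k1.symm⟩
  have hc' : c <+: l := ⟨a, h1.symm⟩
  have hd' : d <+: n := ⟨f, k2.symm⟩
  rcases le_total c.length d.length with h | h
  · have := le_lcp_of_prefix c l n hc' ((List.prefix_of_prefix_length_le hc hd h).trans hd')
    omega
  · have := le_lcp_of_prefix d l n ((List.prefix_of_prefix_length_le hd hc h).trans hc') hd'
    omega

/-- Common prefix length in the free group. -/
def cc {α : Type*} [DecidableEq α] (x y : FreeGroup α) : ℕ := lcp x.toWord y.toWord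

theorem cc_comm {α : Type*} [DecidableEq α] (x y : FreeGroup α) : cc x y = cc y x :=
  lcp_comm _ _

theorem isReduced_invRev {α : Type*} [DecidableEq α] {L : List (α × Bool)} (h : IsReduced L) :
    IsReduced (invRev L) := by
  rw [isReduced_iff_reduce_eq] at h ⊢
  rw [reduce_invRev, h]

theorem cc_spec {α : Type*} [DecidableEq α] (x y : FreeGroup α) :
    ∃ c a b, x.toWord = c ++ a ∧ y.toWord = c ++ b ∧ c.length = cc x y ∧
      (x⁻¹ * y).toWord = invRev a ++ b := by
  obtain ⟨c, a, b, h1, h2, h3, h4⟩ := lcp_spec x.toWord y.toWord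
  refine ⟨c, a, b, h1, h2, h3, ?_⟩
  have hx : IsReduced (c ++ a) := h1 ▸ isReduced_toWord
  have hy : IsReduced (c ++ b) := h2 ▸ isReduced_toWord
  have ha : IsReduced a := hx.infix ⟨c, [], by simp⟩
  have hb : IsReduced b := hy.infix ⟨c, [], by simp⟩
  have hred : IsReduced (invRev a ++ b) := by
    refine List.IsChain.append (isReduced_invRev ha) hb ?_
    intro s hs t ht hst
    cases a with
    | nil => simp at hs
    | cons u a =>
      have hs' : (u.1, !u.2) = s := by simpa [invRev] using hs
      subst hs'
      have := h4 u (by simp) t ht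
      by_contra hne
      apply this
      apply Prod.ext
      · exact hst
      · revert hne; cases u.2 <;> cases t.2 <;> simp
  have : x⁻¹ * y = mk (invRev a ++ b) := by
    have e1 : x = mk c * mk a := by rw [mul_mk, ← h1, mk_toWord]
    have e2 : y = mk c * mk b := by rw [mul_mk, ← h2, mk_toWord]
    rw [← mul_mk, ← inv_mk, e1, e2]; group
  rw [this, toWord_mk, hred.reduce_eq]

theorem norm_inv_mul {α : Type*} [DecidableEq α] (x y : FreeGroup α) :
    (x⁻¹ * y).norm + 2 * cc x y = x.norm + y.norm := by
  obtain ⟨c, a, b, h1, h2, h3, h4⟩ := cc_spec x y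
  simp only [FreeGroup.norm, h1, h2, h4, List.length_append, invRev_length, ← h3]
  omega

theorem norm_mul' {α : Type*} [DecidableEq α] (x y : FreeGroup α) :
    (x * y).norm + 2 * cc x⁻¹ y = x.norm + y.norm := by
  have := norm_inv_mul x⁻¹ y
  simpa using this

theorem cc_le {α : Type*} [DecidableEq α] (x y : FreeGroup α) : cc x y ≤ x.norm := by
  obtain ⟨c, a, b, h1, h2, h3, h4⟩ := cc_spec x y
  simp [FreeGroup.norm, h1, ← h3]

theorem cc_self_inv {α : Type*} [DecidableEq α] (w : FreeGroup α) (hw : w ≠ 1) :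
    2 * cc w w⁻¹ < w.norm := by
  obtain ⟨p, a, b, h1, h2, h3, h4⟩ := cc_spec w w⁻¹
  rw [toWord_inv] at h2
  by_contra hcon
  push Not at hcon
  rw [← h3] at hcon
  have hpos : 0 < w.norm := Nat.pos_of_ne_zero (by simpa using hw)
  have hred : IsReduced w.toWord := isReduced_toWord
  unfold FreeGroup.norm at hcon hpos
  generalize w.toWord = L at *
  have key : ∀ k (hk : k < L.length), k < p.length →
      L[k] = ((L[L.length - 1 - k]'(by omega)).1, !(L[L.length - 1 - k]'(by omega)).2) := by
    intro k hk hkc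
    have e1 : L[k]? = p[k]? := by rw [h1]; simp [List.getElem?_append, hkc]
    have e2 : (invRev L)[k]? = p[k]? := by rw [h2]; simp [List.getElem?_append, hkc]
    have e3 : (invRev L)[k]'(by simpa using hk) = L[k] := by
      apply Option.some_injective
      rw [← List.getElem?_eq_getElem, ← List.getElem?_eq_getElem, e1, e2]
    rw [← e3]
    simp [invRev]
  rcases Nat.even_or_odd' L.length with ⟨m, hm | hm⟩
  · have h := key (m - 1) (by omega) (by omega)
    have hch := List.isChain_iff_getElem.1 hred (m - 1) (by omega)
    have e : L.length - 1 - (m - 1) = m - 1 + 1 := by omega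
    simp only [e] at h
    rw [h] at hch
    simp at hch
  · have h := key m (by omega) (by omega)
    have e : L.length - 1 - m = m := by omega
    simp only [e] at h
    have := congrArg Prod.snd h
    simp at this

/-- The key length estimate for Nielsen reduced families. -/
theorem norm_prod_ge {α β : Type*} [DecidableEq α] (U : β × Bool → FreeGroup α)
    (h2 : ∀ a b c : β × Bool, (a.1 = b.1 → a.2 = b.2) → (b.1 = c.1 → b.2 = c.2) →
      cc (U a)⁻¹ (U b) + cc (U b)⁻¹ (U c) < (U b).norm) :
    ∀ (L : List (β × Bool)) (a b : β × Bool), IsReduced (a :: b :: L) → 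
      (∀ a, U a ≠ 1) →
      cc (U a)⁻¹ ((b :: L).map U).prod = cc (U a)⁻¹ (U b) ∧
      (U a).norm + L.length + 1 ≤ ((a :: b :: L).map U).prod.norm + cc (U a)⁻¹ (U b) 
  | [], a, b, h, hne => by
    have h0 := norm_mul' (U a) (U b)
    have := h2 a b b (by simpa using h) (by simp)
    simp
    omega
  | c :: L, a, b, h, hne => by
    rw [isReduced_cons_cons] at h
    obtain ⟨ih1, ih2⟩ := norm_prod_ge U h2 L b c h.2 hne
    have hbc := (isReduced_cons_cons.1 h.2).1
    have hN := h2 a b c h.1 hbc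
    simp only [List.map_cons, List.prod_cons, List.length_cons] at ih1 ih2 ⊢
    set w := U c * (L.map U).prod with hw
    have e1 := norm_mul' (U b) w
    have e2 := norm_inv_mul (U b) (U b * w)
    rw [inv_mul_cancel_left] at e2
    have e3 := norm_mul' (U a) (U b * w)
    have u1 := lcp_ultra (U a)⁻¹.toWord (U b).toWord (U b * w).toWord
    have u2 := lcp_ultra (U a)⁻¹.toWord (U b * w).toWord (U b).toWord
    rw [lcp_comm (U b * w).toWord] at u2
    simp only [← cc.eq_1] at u1 u2
    have : cc (U a)⁻¹ (U b * w) = cc (U a)⁻¹ (U b) := by omega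
    refine ⟨this, ?_⟩
    omega

end NielsenAux

namespace NielsenAux

open FreeGroup

/-- Numerical code of a word. -/
def code {r : ℕ} (L : List (Fin r × Bool)) : ℕ :=
  Nat.ofDigits (2 * r + 2) (L.map fun a => 2 * (a.1 : ℕ) + a.2.toNat)

theorem code_append {r : ℕ} (L M : List (Fin r × Bool)) :
    code (L ++ M) = code L + (2 * r + 2) ^ L.length * code M := by
  simp [code, Nat.ofDigits_append]

theorem code_inj {r : ℕ} {L M : List (Fin r × Bool)} (hlen : L.length = M.length)
    (h : code L = code M) : L = M := by
  have bd : ∀ (K : List (Fin r × Bool)),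
      ∀ l ∈ K.map (fun a => 2 * (a.1 : ℕ) + a.2.toNat), l < 2 * r + 2 := by
    intro K l hl
    obtain ⟨⟨a, b⟩, -, rfl⟩ := List.mem_map.1 hl
    have := a.2
    cases b <;> simp only [Bool.toNat_false, Bool.toNat_true] <;> omega
  have := Nat.ofDigits_inj_of_len_eq (b := 2 * r + 2) (by omega) (by simpa using hlen)
    (bd L) (bd M) h
  refine List.map_injective_iff.2 ?_ this
  rintro ⟨a, b⟩ ⟨c, d⟩ hh
  cases b <;> cases d <;> simp at hh ⊢ <;> omega

/-- Secondary potential: codes of the two halves of a word. -/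
def pot {r : ℕ} (w : FreeGroup (Fin r)) : ℕ :=
  code (w.toWord.take (w.norm / 2)) + code (w⁻¹.toWord.take (w.norm / 2))

theorem pot_inv {r : ℕ} (w : FreeGroup (Fin r)) : pot w⁻¹ = pot w := by
  simp only [pot, inv_inv, norm_inv_eq]; omega

theorem tie {r : ℕ} (x y : FreeGroup (Fin r)) (h1 : 2 * cc x⁻¹ y = y.norm)
    (h2 : 2 * cc x⁻¹ y ≤ x.norm) (hp : pot x ≤ pot (x * y)) :
    code (y.toWord.take (y.norm / 2)) ≤ code (y⁻¹.toWord.take (y.norm / 2)) := by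
  obtain ⟨p, a, t, e1, e2, e3, e4⟩ := cc_spec y x⁻¹
  rw [cc_comm] at e3
  rw [← e3] at h1 h2
  have hk : y.norm / 2 = p.length := by omega
  have hy : y.norm = p.length + a.length := by simp [FreeGroup.norm, e1]
  have hx : x.norm = p.length + t.length := by rw [← norm_inv_eq]; simp [FreeGroup.norm, e2]
  have hal : a.length = p.length := by omega
  have hw : (x * y).norm = x.norm := by
    have := norm_mul' x y
    omega
  rw [← pot_inv x, ← pot_inv (x * y)] at hp
  have e5 : (x * y)⁻¹.toWord = invRev a ++ t := by rw [mul_inv_rev]; exact e4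
  have e6 : (x * y).toWord = invRev t ++ a := by
    have := congrArg invRev e5
    rw [toWord_inv] at this
    simpa using this
  have e7 : x.toWord = invRev t ++ invRev p := by
    have := congrArg invRev e2
    rw [toWord_inv] at this
    simpa using this
  have e8 : y⁻¹.toWord = invRev a ++ invRev p := by rw [toWord_inv, e1]; simp
  rw [hk, e1, e8]
  have le1 : x.norm / 2 ≤ t.length := by omega
  have le2 : p.length ≤ x.norm / 2 := by omega
  simp only [pot, inv_inv, norm_inv_eq, hw, e5, e6, e7, e2, List.take_append, code_append,
    invRev_length, List.length_take, hal] at hp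
  have z1 : x.norm / 2 - t.length = 0 := by omega
  rw [z1, List.take_of_length_le (l := p) le2,
    List.take_of_length_le (l := invRev a) (by simpa [hal] using le2)] at hp
  simp only [List.take_zero, List.take_append, hal, invRev_length, Nat.sub_self, List.append_nil,
    List.take_length, min_eq_right le2] at hp ⊢
  rw [List.take_of_length_le (l := invRev a) (by simp [hal])]
  omega

/-! ### Nielsen moves -/

variable {G : Type*} [Group G] {r : ℕ}

theorem NE.symm {S T : Fin r → G} (h : NielsenEquiv S T) : NielsenEquiv T S :=
  Relation.EqvGen.symm _ _ h

theorem NE.trans {S T U : Fin r → G} (h : NielsenEquiv S T) (h' : NielsenEquiv T U) :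
    NielsenEquiv S U :=
  Relation.EqvGen.trans _ _ _ h h'

theorem NE.refl (S : Fin r → G) : NielsenEquiv S S := Relation.EqvGen.refl _

theorem NE.map {H : Type*} [Group H] (f : G →* H) {S T : Fin r → G} (h : NielsenEquiv S T) :
    NielsenEquiv (f ∘ S) (f ∘ T) := by
  induction h with
  | refl => exact NE.refl _
  | symm _ _ _ ih => exact NE.symm ih
  | trans _ _ _ _ _ ih1 ih2 => exact NE.trans ih1 ih2
  | rel S T h =>
    apply Relation.EqvGen.rel
    rcases h with ⟨i, h1, h2⟩ | ⟨i, j, hij, h1, h2, h3⟩ | ⟨i, j, hij, h1, h2⟩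
    · exact Or.inl ⟨i, by simp [h1], fun k hk => by simp [h2 k hk]⟩
    · exact Or.inr (Or.inl ⟨i, j, hij, by simp [h1], by simp [h2],
        fun k hk hk' => by simp [h3 k hk hk']⟩)
    · exact Or.inr (Or.inr ⟨i, j, hij, by simp [h1], fun k hk => by simp [h2 k hk]⟩)

theorem NE.inv (S : Fin r → G) (i : Fin r) :
    NielsenEquiv S (Function.update S i (S i)⁻¹) :=
  Relation.EqvGen.rel _ _ (Or.inl ⟨i, by simp, fun k hk => by simp [hk]⟩)

theorem NE.twist (S : Fin r → G) {i j : Fin r} (h : i ≠ j) :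
    NielsenEquiv S (Function.update S i (S i * S j)) :=
  Relation.EqvGen.rel _ _ (Or.inr (Or.inr ⟨i, j, h.symm, by simp, fun k hk => by simp [hk]⟩))

theorem NE.twist_inv (S : Fin r → G) {i j : Fin r} (h : i ≠ j) :
    NielsenEquiv S (Function.update S i (S i * (S j)⁻¹)) := by
  have := NE.twist (Function.update S i (S i * (S j)⁻¹)) h
  simp [h.symm] at this
  exact NE.symm this

/-- Signed entries of a tuple. -/
def sg (S : Fin r → G) (a : Fin r × Bool) : G := cond a.2 (S a.1) (S a.1)⁻¹

theorem sg_not (S : Fin r → G) (a : Fin r × Bool) : sg S (a.1, !a.2) = (sg S a)⁻¹ := by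
  rcases a with ⟨i, _ | _⟩ <;> simp [sg]

theorem NE.sg_mul (S : Fin r → G) {a b : Fin r × Bool} (h : a.1 ≠ b.1) :
    NielsenEquiv S (Function.update S a.1 (sg S a * sg S b)) := by
  rcases a with ⟨i, _ | _⟩ <;> rcases b with ⟨j, _ | _⟩ <;> simp only [sg, cond] at h ⊢
  · have := NE.trans (NE.inv S i) (NE.twist_inv _ h)
    simpa [h.symm] using this
  · have := NE.trans (NE.inv S i) (NE.twist _ h)
    simpa [h.symm] using this
  · exact NE.twist_inv _ h
  · exact NE.twist _ h

theorem NE.perm (S : Fin r → G) (σ : Equiv.Perm (Fin r)) : NielsenEquiv S (S ∘ σ) := by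
  induction σ using Equiv.Perm.swap_induction_on generalizing S with
  | one => exact NE.refl _
  | swap_mul f x y hxy ih =>
    refine NE.trans ?_ (ih (S ∘ Equiv.swap x y))
    refine Relation.EqvGen.rel _ _ (Or.inr (Or.inl ⟨x, y, hxy, by simp, by simp, ?_⟩))
    intro k h1 h2
    simp [Equiv.swap_apply_of_ne_of_ne h1 h2]

theorem NE.signs (S : Fin r → G) (ε : Fin r → Bool) :
    NielsenEquiv S (fun i => sg S (i, ε i)) := by
  suffices h : ∀ s : Finset (Fin r), NielsenEquiv S (fun i => if i ∈ s then sg S (i, ε i) else S i) by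
    simpa using h Finset.univ
  intro s
  induction s using Finset.induction_on with
  | empty => simpa using NE.refl S
  | insert a s ha ih =>
    refine NE.trans ih ?_
    cases hε : ε a
    · convert NE.inv _ a using 1
      funext i
      by_cases hi : i = a
      · subst hi; simp [ha, sg, hε]
      · simp [hi]
    · convert NE.refl _ using 1
      funext i
      by_cases hi : i = a
      · subst hi; simp [ha, sg, hε]
      · simp [hi]

/-! ### The easy direction -/

theorem exists_of_move {S S' : Fin r → G} (h : NielsenMove S S') :
    ∃ ψ : FreeGroup (Fin r) ≃* FreeGroup (Fin r),
        FreeGroup.lift S = (FreeGroup.lift S').comp ψ.toMonoidHom := by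
  rcases h with ⟨i, h1, h2⟩ | ⟨i, j, hij, h1, h2, h3⟩ | ⟨i, j, hij, h1, h2⟩
  · let f : FreeGroup (Fin r) →* FreeGroup (Fin r) :=
      FreeGroup.lift (Function.update FreeGroup.of i (FreeGroup.of i)⁻¹)
    have hf : f.comp f = MonoidHom.id _ := by
      ext k
      by_cases hk : k = i
      · subst hk; simp [f]
      · simp [f, hk]
    refine ⟨MonoidHom.toMulEquiv f f hf hf, ?_⟩
    ext k
    by_cases hk : k = i
    · subst hk; simp [f, h1]
    · simp [f, hk, h2]
  · refine ⟨FreeGroup.freeGroupCongr (Equiv.swap i j), ?_⟩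
    ext k
    by_cases hk : k = i
    · subst hk; simp [h2]
    · by_cases hk' : k = j
      · subst hk'; simp [h1]
      · simp [Equiv.swap_apply_of_ne_of_ne hk hk', h3 k hk hk']
  · let f : FreeGroup (Fin r) →* FreeGroup (Fin r) :=
      FreeGroup.lift (Function.update FreeGroup.of i (FreeGroup.of i * (FreeGroup.of j)⁻¹))
    let g : FreeGroup (Fin r) →* FreeGroup (Fin r) :=
      FreeGroup.lift (Function.update FreeGroup.of i (FreeGroup.of i * FreeGroup.of j))
    have hfg : f.comp g = MonoidHom.id _ := by
      ext k
      by_cases hk : k = i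
      · subst hk; simp [f, g, hij]
      · simp [f, g, hk]
    have hgf : g.comp f = MonoidHom.id _ := by
      ext k
      by_cases hk : k = i
      · subst hk; simp [f, g, hij]
      · simp [f, g, hk]
    refine ⟨MonoidHom.toMulEquiv f g hgf hfg, ?_⟩
    ext k
    by_cases hk : k = i
    · subst hk; simp [f, h1, h2 j hij]
    · simp [f, hk, h2]

theorem exists_of_equiv {S S' : Fin r → G} (h : NielsenEquiv S S') :
    ∃ ψ : FreeGroup (Fin r) ≃* FreeGroup (Fin r),
        FreeGroup.lift S = (FreeGroup.lift S').comp ψ.toMonoidHom := by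
  induction h with
  | rel _ _ h => exact exists_of_move h
  | refl S => exact ⟨MulEquiv.refl _, by ext; simp⟩
  | symm _ _ _ ih =>
    obtain ⟨ψ, h⟩ := ih
    exact ⟨ψ.symm, by rw [h]; ext; simp⟩
  | trans _ _ _ _ _ ih1 ih2 =>
    obtain ⟨ψ, h⟩ := ih1
    obtain ⟨ψ', h'⟩ := ih2
    exact ⟨ψ.trans ψ', by rw [h, h']; ext; simp⟩

/-! ### The hard direction -/

/-- Nielsen complexity. -/
def mu (u : Fin r → FreeGroup (Fin r)) : ℕ ×ₗ ℕ :=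
  toLex (∑ i, (u i).norm, ∑ i, pot (u i))

theorem sum_update (F : FreeGroup (Fin r) → ℕ) (u : Fin r → FreeGroup (Fin r)) (i : Fin r)
    (w : FreeGroup (Fin r)) :
    ∑ k, F (Function.update u i w k) + F (u i) = ∑ k, F (u k) + F w := by
  rw [← Finset.add_sum_erase _ _ (Finset.mem_univ i),
    ← Finset.add_sum_erase _ (fun k => F (u k)) (Finset.mem_univ i)]
  have : ∑ k ∈ Finset.univ.erase i, F (Function.update u i w k) =
      ∑ k ∈ Finset.univ.erase i, F (u k) := by
    refine Finset.sum_congr rfl fun k hk => ?_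
    rw [Function.update_of_ne (Finset.ne_of_mem_erase hk)]
  rw [this, Function.update_self]
  omega

theorem norm_sg (u : Fin r → FreeGroup (Fin r)) (a : Fin r × Bool) :
    (sg u a).norm = (u a.1).norm := by
  rcases a with ⟨i, _ | _⟩ <;> simp [sg]

theorem pot_sg (u : Fin r → FreeGroup (Fin r)) (a : Fin r × Bool) :
    pot (sg u a) = pot (u a.1) := by
  rcases a with ⟨i, _ | _⟩ <;> simp [sg, pot_inv]

theorem equiv_of {T : Fin r → FreeGroup (Fin r)}
    (ψ : FreeGroup (Fin r) ≃* FreeGroup (Fin r)) (hT : FreeGroup.lift T = ψ.toMonoidHom) :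
    NielsenEquiv T FreeGroup.of := by
  obtain ⟨u, hu, hmin⟩ := WellFounded.has_min (InvImage.wf (mu (r := r)) wellFounded_lt)
    {u | NielsenEquiv u T} ⟨T, NE.refl T⟩
  change NielsenEquiv u T at hu
  obtain ⟨ψ', hψ'⟩ := exists_of_equiv hu
  have hbij : Function.Bijective (FreeGroup.lift u) := by
    rw [hψ', hT]
    exact ψ.bijective.comp ψ'.bijective
  refine NE.trans (NE.symm hu) ?_
  -- minimality
  have hm : ∀ a b : Fin r × Bool, a.1 ≠ b.1 → (sg u a).norm ≤ (sg u a * sg u b).norm ∧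
      ((sg u a * sg u b).norm = (sg u a).norm → pot (sg u a) ≤ pot (sg u a * sg u b)) := by
    intro a b hab
    have h := hmin _ (NE.trans (NE.symm (NE.sg_mul u hab)) hu)
    have s1 := sum_update FreeGroup.norm u a.1 (sg u a * sg u b)
    have s2 := sum_update pot u a.1 (sg u a * sg u b)
    simp only [InvImage, mu, Prod.Lex.toLex_lt_toLex, not_or, not_and, not_lt] at h
    rw [norm_sg u a, pot_sg u a]
    refine ⟨by omega, fun h' => ?_⟩
    have := h.2 (by omega)
    omega
  have hne : ∀ a, sg u a ≠ 1 := by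
    intro a
    intro h
    rw [← FreeGroup.norm_eq_zero, norm_sg, FreeGroup.norm_eq_zero] at h
    have : FreeGroup.lift u (FreeGroup.of a.1) = FreeGroup.lift u 1 := by simp [h]
    exact FreeGroup.of_ne_one _ (hbij.1 this)
  have n0 : ∀ a b : Fin r × Bool, a.1 ≠ b.1 → 2 * cc (sg u a)⁻¹ (sg u b) ≤ (sg u b).norm := by
    intro a b hab
    have := (hm a b hab).1
    have := norm_mul' (sg u a) (sg u b)
    omega
  have nself : ∀ a : Fin r × Bool, 2 * cc (sg u a)⁻¹ (sg u a) < (sg u a).norm := by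
    intro a
    rw [cc_comm]
    exact cc_self_inv _ (hne a)
  have n1 : ∀ a b : Fin r × Bool, (a.1 = b.1 → a.2 = b.2) →
      2 * cc (sg u a)⁻¹ (sg u b) ≤ (sg u b).norm := by
    intro a b hab
    by_cases h : a.1 = b.1
    · obtain rfl : a = b := Prod.ext h (hab h)
      exact (nself a).le
    · exact n0 a b h
  have n1' : ∀ a b : Fin r × Bool, (a.1 = b.1 → a.2 = b.2) →
      2 * cc (sg u a)⁻¹ (sg u b) ≤ (sg u a).norm := by
    intro a b hab
    have := n1 (b.1, !b.2) (a.1, !a.2) (fun h => by simp [hab h.symm])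
    rwa [sg_not, sg_not, inv_inv, norm_inv_eq, cc_comm] at this
  have nt : ∀ a b : Fin r × Bool, (a.1 = b.1 → a.2 = b.2) →
      2 * cc (sg u a)⁻¹ (sg u b) = (sg u b).norm →
      code ((sg u b).toWord.take ((sg u b).norm / 2)) ≤
        code ((sg u b)⁻¹.toWord.take ((sg u b).norm / 2)) := by
    intro a b hab h
    have hab' : a.1 ≠ b.1 := by
      intro h'
      obtain rfl : a = b := Prod.ext h' (hab h')
      have := nself a
      omega
    refine tie (sg u a) (sg u b) h (n1' a b hab) ((hm a b hab').2 ?_)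
    have := norm_mul' (sg u a) (sg u b)
    omega
  have n2 : ∀ a b c : Fin r × Bool, (a.1 = b.1 → a.2 = b.2) → (b.1 = c.1 → b.2 = c.2) →
      cc (sg u a)⁻¹ (sg u b) + cc (sg u b)⁻¹ (sg u c) < (sg u b).norm := by
    intro a b c hab hbc
    by_contra hcon
    have k1 := n1 a b hab
    have k2 := n1' b c hbc
    have t1 := nt a b hab (by omega)
    have t2 := nt (c.1, !c.2) (b.1, !b.2) (fun h => by simp [hbc h.symm]) (by
      rw [sg_not, sg_not, inv_inv, norm_inv_eq, cc_comm]; omega)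
    rw [sg_not, inv_inv, norm_inv_eq] at t2
    have hl : (sg u b)⁻¹.toWord.length = (sg u b).toWord.length := by simp [toWord_inv]
    have heq := code_inj (by simp [hl]) (le_antisymm t1 t2)
    have hle := le_lcp_of_prefix _ (sg u b).toWord (sg u b)⁻¹.toWord
      (List.take_prefix ((sg u b).norm / 2) _) (by rw [heq]; exact List.take_prefix _ _)
    have hs := cc_self_inv _ (hne b)
    unfold cc at hs
    rw [List.length_take] at hle
    have : (sg u b).norm = (sg u b).toWord.length := rfl
    omega
  -- every generator is a signed entry
  have hgen : ∀ i : Fin r, ∃ a : Fin r × Bool, sg u a = FreeGroup.of i := by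
    intro i
    obtain ⟨w, hw⟩ := hbij.2 (FreeGroup.of i)
    have hred : IsReduced w.toWord := isReduced_toWord
    rw [← mk_toWord (x := w), FreeGroup.lift_mk] at hw
    change (w.toWord.map (sg u)).prod = _ at hw
    generalize w.toWord = L at hw hred
    match L, hw, hred with
    | [], hw, _ => exact absurd hw.symm (FreeGroup.of_ne_one i)
    | [a], hw, _ => exact ⟨a, by simpa using hw⟩
    | a :: b :: L, hw, hred =>
      have h := (norm_prod_ge (sg u) n2 L a b hred hne).2
      rw [hw, norm_of] at h
      have h' := n1' a b (isReduced_cons_cons.1 hred).1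
      have : (sg u a).norm ≠ 0 := by simpa using hne a
      omega
  choose σ hσ using hgen
  have hinj : Function.Injective fun i => (σ i).1 := by
    intro i j hij
    dsimp only at hij
    have hi := hσ i
    have hj := hσ j
    generalize σ i = s at *
    generalize σ j = t at *
    obtain ⟨s, b⟩ := s
    obtain ⟨t, c⟩ := t
    change s = t at hij
    subst hij
    by_cases hbc : b = c
    · subst hbc
      exact FreeGroup.of_injective (hi.symm.trans hj)
    · have : sg u (s, b) = (sg u (s, c))⁻¹ := by
        rw [← sg_not]
        congr 2
        revert hbc; cases b <;> cases c <;> simp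
      rw [hi, hj] at this
      have := congrArg toWord this
      simp [toWord_inv, invRev] at this
  let τ : Equiv.Perm (Fin r) := Equiv.ofBijective _ (Finite.injective_iff_bijective.1 hinj)
  have := NE.trans (NE.perm u τ) (NE.signs _ (fun i => (σ i).2))
  convert this using 1
  funext i
  exact (hσ i).symm

end NielsenAux

/-- Two generating `r`-tuples `S`, `S'` of a group `G` are Nielsen equivalent if and only
if there is an automorphism `ψ` of the free group on `r` generators with
`φ_S = φ_{S'} ∘ ψ`, where `φ_S` denotes the homomorphism sending the `i`-th free
generator to `S i`. -/
theorem nielsenEquiv_iff_exists_automorphism {G : Type*} [Group G] {r : ℕ}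
    (S S' : Fin r → G)
    (hS : Subgroup.closure (Set.range S) = ⊤)
    (hS' : Subgroup.closure (Set.range S') = ⊤) :
    NielsenEquiv S S' ↔
      ∃ ψ : FreeGroup (Fin r) ≃* FreeGroup (Fin r),
        FreeGroup.lift S = (FreeGroup.lift S').comp ψ.toMonoidHom := by
  refine ⟨NielsenAux.exists_of_equiv, ?_⟩
  rintro ⟨ψ, hψ⟩
  have h := NielsenAux.equiv_of (T := fun i => ψ (FreeGroup.of i)) ψ (by ext; simp)
  have h' := NielsenAux.NE.map (FreeGroup.lift S') h
  convert h' using 1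
  · funext i
    have := DFunLike.congr_fun hψ (FreeGroup.of i)
    simpa using this
  · funext i
    simp
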